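/- Let a_1, a_2 ≥ 0 and b_1, b_2 > 0 with b_1 ≠ b_2, and set a = a_1 + a_2. Let p = (u, v_1, v_2) : [0,∞) → ℝ^3 be differentiable with p'(t) = B* p(t) for all t ≥ 0 and p(0) = (u_0, 0, 0). Then u satisfies u'(t) = −a·u(t) + ∫_0^t K(t−s)·u(s) ds for all t ≥ 0, where K(t) = a_1 b_1 e^{−b_1 t} + a_2·(b_1 b_2/(b_2 − b_1))·(e^{−b_1 t} − e^{−b_2 t}). -/

import Mathlib

open MeasureTheory

/-!
Eliminate `v` from a linear block system `u' = A u + C v`, `v' = W u + M v`, `v(0) = 0`.  If `φ` is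
the row solution of `φ' = φ M`, `φ(0) = C`, then `s ↦ φ(t - s) v(s)` has derivative
`φ(t - s) W u(s)`, because the two terms containing `M` cancel; integrating over `[0, t]` gives
`C v(t) = ∫₀ᵗ φ(t - s) W u(s) ds`.  For the three-state loop `M` is triangular with eigenvalues
`-b₁ ≠ -b₂`, so `φ` is an explicit combination of two exponentials.
-/

section BlockSystem

variable {E F : Type*} [NormedAddCommGroup E] [NormedSpace ℝ E]
  [NormedAddCommGroup F] [NormedSpace ℝ F] {M : F →L[ℝ] F} {φ : ℝ → F →L[ℝ] E} {v : ℝ → F}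

theorem hasDerivAt_propagator_sub_apply {f : F} {b s : ℝ}
    (hφ : HasDerivAt φ (φ (b - s) ∘L M) (b - s)) (hv : HasDerivAt v (f + M (v s)) s) :
    HasDerivAt (fun r ↦ φ (b - r) (v r)) (φ (b - s) f) s := by
  have hφ' : HasDerivAt (fun r ↦ φ (b - r)) (-(φ (b - s) ∘L M)) s := hφ.comp_const_sub b s
  refine (hφ'.clm_apply hv).congr_deriv ?_
  simp

theorem integral_propagator_sub_apply [CompleteSpace E] {f : ℝ → F} {a b : ℝ}
    (hφ : ∀ s, HasDerivAt φ (φ s ∘L M) s)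
    (hv : ∀ s ∈ Set.uIcc a b, HasDerivAt v (f s + M (v s)) s)
    (hf : ContinuousOn f (Set.uIcc a b)) :
    ∫ s in a..b, φ (b - s) (f s) = φ 0 (v b) - φ (b - a) (v a) := by
  have hφ_cont : Continuous φ := continuous_iff_continuousAt.2 fun s ↦ (hφ s).continuousAt
  have h_int : IntervalIntegrable (fun s ↦ φ (b - s) (f s)) volume a b :=
    ((hφ_cont.comp (continuous_sub_left b)).continuousOn.clm_apply hf).intervalIntegrable
  rw [intervalIntegral.integral_eq_sub_of_hasDerivAt
    (fun s hs ↦ hasDerivAt_propagator_sub_apply (hφ (b - s)) (hv s hs)) h_int, sub_self]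

theorem hasDerivAt_memory_of_block_system [CompleteSpace E] {A : E →L[ℝ] E} {W : E →L[ℝ] F}
    {u : ℝ → E} (hφ : ∀ s, HasDerivAt φ (φ s ∘L M) s)
    (hu : ∀ t, 0 ≤ t → HasDerivAt u (A (u t) + φ 0 (v t)) t)
    (hv : ∀ t, 0 ≤ t → HasDerivAt v (W (u t) + M (v t)) t) (hv₀ : v 0 = 0)
    {t : ℝ} (ht : 0 ≤ t) :
    HasDerivAt u (A (u t) + ∫ s in (0 : ℝ)..t, φ (t - s) (W (u s))) t := by
  have h_nonneg : ∀ s ∈ Set.uIcc 0 t, 0 ≤ s := fun s hs ↦ (Set.uIcc_of_le ht ▸ hs).1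
  have hWu : ContinuousOn (fun s ↦ W (u s)) (Set.uIcc 0 t) := fun s hs ↦
    (W.continuous.continuousAt.comp (hu s (h_nonneg s hs)).continuousAt).continuousWithinAt
  have h_coupling : ∫ s in (0 : ℝ)..t, φ (t - s) (W (u s)) = φ 0 (v t) := by
    simpa only [hv₀, map_zero, sub_zero] using
      integral_propagator_sub_apply hφ (fun s hs ↦ hv s (h_nonneg s hs)) hWu
  exact h_coupling ▸ hu t ht

end BlockSystem

section ThreeStateLoop

open ContinuousLinearMap

variable {E : Type*} [NormedAddCommGroup E] [NormedSpace ℝ E]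

/-- The generator of the two hidden states of the three-state loop, that is the lower right
`2 × 2` block of `B*`, acting on pairs `(v₁, v₂)`. -/
def hiddenGenerator (E : Type*) [NormedAddCommGroup E] [NormedSpace ℝ E] (b₁ b₂ : ℝ) :
    E × E →L[ℝ] E × E :=
  (-b₁ • fst ℝ E E + b₂ • snd ℝ E E).prod (-b₂ • snd ℝ E E)

/-- The row `(b₁, 0)` of `B*` composed with the flow of the hidden states: the rate at time `t` of
return to the first state from hidden mass `(x₁, x₂)` at time `0`.  At `b₁ = b₂`, where the
true flow has a term `b₁ b₂ t e^{-b₁ t}`, this formula loses it because `x / 0 = 0`. -/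
noncomputable def returnPropagator (E : Type*) [NormedAddCommGroup E] [NormedSpace ℝ E]
    (b₁ b₂ t : ℝ) : E × E →L[ℝ] E :=
  (b₁ * Real.exp (-b₁ * t)) • fst ℝ E E +
    (b₁ * b₂ / (b₂ - b₁) * (Real.exp (-b₁ * t) - Real.exp (-b₂ * t))) • snd ℝ E E

/-- The memory kernel `K` of the three-state loop: the rate at time `t` of return to the first
state after leaving it at time `0`.  The same junk value occurs at `b₁ = b₂` as in
`returnPropagator`. -/
noncomputable def memoryKernel (a₁ a₂ b₁ b₂ t : ℝ) : ℝ :=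
  a₁ * b₁ * Real.exp (-b₁ * t) +
    a₂ * (b₁ * b₂ / (b₂ - b₁)) * (Real.exp (-b₁ * t) - Real.exp (-b₂ * t))

theorem returnPropagator_zero_apply (b₁ b₂ : ℝ) (x : E × E) :
    returnPropagator E b₁ b₂ 0 x = b₁ • x.1 := by
  simp [returnPropagator]

theorem returnPropagator_apply_smul (a₁ a₂ b₁ b₂ t : ℝ) (x : E) :
    returnPropagator E b₁ b₂ t (a₁ • x, a₂ • x) = memoryKernel a₁ a₂ b₁ b₂ t • x := by
  simp only [returnPropagator, memoryKernel, add_apply, smul_apply, coe_fst', coe_snd']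
  module

theorem hasDerivAt_exp_const_mul (c t : ℝ) :
    HasDerivAt (fun s ↦ Real.exp (c * s)) (c * Real.exp (c * t)) t := by
  simpa [mul_comm] using ((hasDerivAt_id t).const_mul c).exp

theorem hasDerivAt_returnPropagator {b₁ b₂ : ℝ} (hb : b₁ ≠ b₂) (t : ℝ) :
    HasDerivAt (returnPropagator E b₁ b₂)
      (returnPropagator E b₁ b₂ t ∘L hiddenGenerator E b₁ b₂) t := by
  have h_fst := (hasDerivAt_exp_const_mul (-b₁) t).const_mul b₁
  have h_snd := ((hasDerivAt_exp_const_mul (-b₁) t).sub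
    (hasDerivAt_exp_const_mul (-b₂) t)).const_mul (b₁ * b₂ / (b₂ - b₁))
  refine ((h_fst.smul_const (fst ℝ E E)).add (h_snd.smul_const (snd ℝ E E))).congr_deriv ?_
  have h_coeff : b₁ * b₂ / (b₂ - b₁) * (b₂ - b₁) = b₁ * b₂ :=
    div_mul_cancel₀ _ (sub_ne_zero.2 hb.symm)
  ext x <;> simp only [returnPropagator, hiddenGenerator, add_apply, smul_apply, comp_apply,
    prod_apply, coe_fst', coe_snd', inl_apply, inr_apply, smul_zero, add_zero, zero_add]
  · module
  · match_scalars
    linear_combination Real.exp (-b₁ * t) * h_coeff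

theorem stmt_8_general [CompleteSpace E] {a₁ a₂ b₁ b₂ : ℝ} (hb : b₁ ≠ b₂) {u v₁ v₂ : ℝ → E}
    (hu : ∀ t, 0 ≤ t → HasDerivAt u (-(a₁ + a₂) • u t + b₁ • v₁ t) t)
    (hv₁ : ∀ t, 0 ≤ t → HasDerivAt v₁ (a₁ • u t - b₁ • v₁ t + b₂ • v₂ t) t)
    (hv₂ : ∀ t, 0 ≤ t → HasDerivAt v₂ (a₂ • u t - b₂ • v₂ t) t)
    (hv₁₀ : v₁ 0 = 0) (hv₂₀ : v₂ 0 = 0) {t : ℝ} (ht : 0 ≤ t) :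
    HasDerivAt u
      (-(a₁ + a₂) • u t + ∫ s in (0 : ℝ)..t, memoryKernel a₁ a₂ b₁ b₂ (t - s) • u s) t := by
  have hv : ∀ s, 0 ≤ s → HasDerivAt (fun r ↦ (v₁ r, v₂ r))
      ((a₁ • u s, a₂ • u s) + hiddenGenerator E b₁ b₂ (v₁ s, v₂ s)) s := fun s hs ↦ by
    refine ((hv₁ s hs).prodMk (hv₂ s hs)).congr_deriv (Prod.ext ?_ ?_) <;>
      simp only [hiddenGenerator, prod_apply, add_apply, smul_apply, coe_fst', coe_snd',
        Prod.mk_add_mk] <;> module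
  simp only [← returnPropagator_apply_smul]
  exact hasDerivAt_memory_of_block_system (u := u)
    (A := -(a₁ + a₂) • ContinuousLinearMap.id ℝ E)
    (W := (a₁ • ContinuousLinearMap.id ℝ E).prod (a₂ • ContinuousLinearMap.id ℝ E))
    (hasDerivAt_returnPropagator hb)
    (fun s hs ↦ returnPropagator_zero_apply b₁ b₂ (v₁ s, v₂ s) ▸ hu s hs) hv
    (Prod.ext hv₁₀ hv₂₀) ht

end ThreeStateLoop

theorem hasDerivAt_threeState_iff {a₁ a₂ b₁ b₂ t : ℝ} {p : ℝ → Fin 3 → ℝ} {x : Fin 3 → ℝ} :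
    HasDerivAt p (!![-a₁ - a₂, b₁, 0; a₁, -b₁, b₂; a₂, 0, -b₂].mulVec x) t ↔
      HasDerivAt (fun s ↦ p s 0) (-(a₁ + a₂) * x 0 + b₁ * x 1) t ∧
      HasDerivAt (fun s ↦ p s 1) (a₁ * x 0 - b₁ * x 1 + b₂ * x 2) t ∧
      HasDerivAt (fun s ↦ p s 2) (a₂ * x 0 - b₂ * x 2) t := by
  have h_mulVec : !![-a₁ - a₂, b₁, 0; a₁, -b₁, b₂; a₂, 0, -b₂].mulVec x =
      ![-(a₁ + a₂) * x 0 + b₁ * x 1, a₁ * x 0 - b₁ * x 1 + b₂ * x 2, a₂ * x 0 - b₂ * x 2] := by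
    ext i
    fin_cases i <;>
      simp [Matrix.mulVec, dotProduct, Fin.sum_univ_three, -mul_eq_mul_right_iff] <;> ring
  rw [h_mulVec, hasDerivAt_pi]
  simp [Fin.forall_fin_succ]

/-- **Three states: from Markov to Memory.**  The first component of the three-state loop
Markov process solves the memory equation with kernel
`K(t) = a₁b₁e^{−b₁t} + a₂ (b₁b₂/(b₂−b₁)) (e^{−b₁t} − e^{−b₂t})`. -/
theorem stmt_8 (a₁ a₂ b₁ b₂ : ℝ) (ha₁ : 0 ≤ a₁) (ha₂ : 0 ≤ a₂)
    (hb₁ : 0 < b₁) (hb₂ : 0 < b₂) (hbd : b₁ ≠ b₂) (u₀ : ℝ)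
    (Bstar : Matrix (Fin 3) (Fin 3) ℝ)
    (hB : Bstar = !![-a₁ - a₂, b₁, 0; a₁, -b₁, b₂; a₂, 0, -b₂])
    (p : ℝ → Fin 3 → ℝ)
    (hp : ∀ t : ℝ, 0 ≤ t → HasDerivAt p (Bstar.mulVec (p t)) t)
    (hp0 : p 0 = ![u₀, 0, 0])
    (K : ℝ → ℝ)
    (hK : K = fun t => a₁ * b₁ * Real.exp (-b₁ * t) +
      a₂ * (b₁ * b₂ / (b₂ - b₁)) * (Real.exp (-b₁ * t) - Real.exp (-b₂ * t))) :
    ∀ t : ℝ, 0 ≤ t →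
      HasDerivAt (fun s => p s 0)
        (-(a₁ + a₂) * p t 0 + ∫ s in (0:ℝ)..t, K (t - s) * p s 0) t := by
  subst hB hK
  simp only [hasDerivAt_threeState_iff] at hp
  exact fun t ht ↦ stmt_8_general hbd (fun s hs ↦ (hp s hs).1) (fun s hs ↦ (hp s hs).2.1)
    (fun s hs ↦ (hp s hs).2.2) (by simp [hp0]) (by simp [hp0]) ht
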